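/- Theorem 2 (ℓ1/ℓ1 approximate recovery). Let ε > 0 and suppose G is a (c,d)-regular (⌊k/(2ε)+1⌋, 1/2+ε)-expander. Let x ∈ ℝ₊ⁿ and run the message-passing algorithm on y = Ax. Then there exists a constant C depending only on ε such that for every integer t ≥ C·(1+log(k+1))·(1+log(cd)), the estimate satisfies ‖x − x̂^{2t}‖₁ ≤ (1 + d/(2ε))·‖x − x^(k)‖₁. -/

import Mathlib

open Finset

namespace MP

/-- Neighborhood of a left vertex `i ∈ X`: the measurements involving `i`. -/
def nhdX {n m : ℕ} (A : Fin m → Fin n → Bool) (i : Fin n) : Finset (Fin m) :=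
  Finset.univ.filter (fun j => A j i = true)

/-- Neighborhood of a right vertex `j ∈ Y`. -/
def nhdY {n m : ℕ} (A : Fin m → Fin n → Bool) (j : Fin m) : Finset (Fin n) :=
  Finset.univ.filter (fun i => A j i = true)

/-- `Γ(S)`, the set of neighbors of `S ⊆ X`. -/
def Gam {n m : ℕ} (A : Fin m → Fin n → Bool) (S : Finset (Fin n)) : Finset (Fin m) :=
  S.biUnion (nhdX A)

/-- The measurement vector `y = A x`. -/
noncomputable def yvec {n m : ℕ} (A : Fin m → Fin n → Bool) (x : Fin n → ℝ) (j : Fin m) : ℝ :=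
  ∑ i ∈ nhdY A j, x i

/-- Message from measurement `j` to variable `i`, given current variable messages `z`:
`y_j - ∑_{k ∈ N_y(j) \ {i}} z_k`. -/
noncomputable def msgY {n m : ℕ} (A : Fin m → Fin n → Bool) (x z : Fin n → ℝ)
    (j : Fin m) (i : Fin n) : ℝ :=
  yvec A x j - ∑ k ∈ (nhdY A j).erase i, z k

/-- The algorithm's estimate `x̂^s` (equal to the variable-to-check message `m_{i→j}^s`,
which does not depend on `j`).  At odd times it is the min of incoming check messages;
at even times `s+1` it is `max(0, max of incoming check messages)`. -/
noncomputable def xhat {n m : ℕ} (A : Fin m → Fin n → Bool) (x : Fin n → ℝ) :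
    ℕ → Fin n → ℝ
  | 0 => fun _ => 0
  | s + 1 => fun i =>
      if Even (s + 1) then
        max 0 (sSup ((fun l => msgY A x (xhat A x s) l i) '' (↑(nhdX A i) : Set (Fin m))))
      else
        sInf ((fun l => msgY A x (xhat A x s) l i) '' (↑(nhdX A i) : Set (Fin m)))

/-- The variable-to-check message `m_{i→j}^s` (independent of `j`). -/
noncomputable def mXY {n m : ℕ} (A : Fin m → Fin n → Bool) (x : Fin n → ℝ)
    (s : ℕ) (i : Fin n) (_j : Fin m) : ℝ := xhat A x s i

/-- The check-to-variable message `m_{j→i}^s`. -/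
noncomputable def mYX {n m : ℕ} (A : Fin m → Fin n → Bool) (x : Fin n → ℝ)
    (s : ℕ) (j : Fin m) (i : Fin n) : ℝ := msgY A x (xhat A x s) j i

/-- `G` is `(c,d)`-regular. -/
def IsRegular {n m : ℕ} (A : Fin m → Fin n → Bool) (c d : ℕ) : Prop :=
  (∀ i, (nhdX A i).card = c) ∧ (∀ j, (nhdY A j).card = d)

/-- `G` is a `(kk, α)`-expander (w.r.t. left degree `c`). -/
def IsExpander {n m : ℕ} (A : Fin m → Fin n → Bool) (c kk : ℕ) (α : ℝ) : Prop :=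
  ∀ S : Finset (Fin n), S.card ≤ kk → α * c * S.card ≤ ((Gam A S).card : ℝ)

/-- ℓ¹ norm on `ℝⁿ`. -/
noncomputable def l1 {n : ℕ} (u : Fin n → ℝ) : ℝ := ∑ i, |u i|

/-- `z` has at most `k` nonzero entries. -/
def IsKSparse {n : ℕ} (k : ℕ) (z : Fin n → ℝ) : Prop :=
  (Finset.univ.filter (fun i => z i ≠ 0)).card ≤ k

/-- `xk` is a best `k`-sparse nonnegative approximation of `x` in ℓ¹. -/
def BestKSparse {n : ℕ} (k : ℕ) (x xk : Fin n → ℝ) : Prop :=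
  (∀ i, 0 ≤ xk i) ∧ IsKSparse k xk ∧
    ∀ z : Fin n → ℝ, (∀ i, 0 ≤ z i) → IsKSparse k z →
      l1 (fun i => x i - xk i) ≤ l1 (fun i => x i - z i)


end MP

open MP Finset

/-!
The even iterates of message passing increase, the odd ones decrease, and `x` lies in between, because
both updates are antitone and fix `x`. The widths `w t = x̂^(2t+1) - x̂^(2t)` of these enclosures
satisfy `w (t+1) i ≤ ∑ j, w t j` for every check adjacent to `i`, the sum running over the other
neighbours of the check.

Enlarge the support of the sparse approximation greedily to a set `T` of at most `k/(2ε)` vertices such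
that no vertex outside `T` has most of its checks in `Γ(T)`. Then the total contribution `ν` of the
vertices outside `T` to the recursion on `T` is at most `(d-1)·c·∑_{i∉T} x i`. Two phases follow.

* Peeling: expansion beyond one half yields many vertices of `T` owning a check that no other remaining
  vertex touches, so after `r = O(log k)` rounds every width on `T` is at most `d ^ r * ν`.
* Contraction: by the layer-cake form of expansion, `∑_T w` contracts by the factor `1/(1+2ε)` per
  round towards `ν/(2εc)`, and the `1` in `d - 1` leaves room for the remaining excess.
-/

namespace MP

section Expansion

variable {ι κ R : Type*} [DecidableEq κ] {N : ι → Finset κ} {S T : Finset ι} {c : ℕ}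

lemma sum_sum_incidence_comm [AddCommMonoid R] (N : ι → Finset κ) (S : Finset ι) (L : Finset κ)
    (g : κ → ι → R) :
    ∑ l ∈ L, ∑ i ∈ S with l ∈ N i, g l i = ∑ i ∈ S, ∑ l ∈ N i ∩ L, g l i :=
  sum_comm' fun l i ↦ by simp only [mem_filter, mem_inter]; tauto

lemma sum_sum_incidence_le [Semiring R] [PartialOrder R] [IsOrderedRing R] {v : ι → R}
    (hc : ∀ i ∈ S, #(N i) ≤ c) (hv : ∀ i ∈ S, 0 ≤ v i) (L : Finset κ) :
    ∑ l ∈ L, ∑ i ∈ S with l ∈ N i, v i ≤ c * ∑ i ∈ S, v i := by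
  rw [sum_sum_incidence_comm, mul_sum]
  refine sum_le_sum fun i hi ↦ ?_
  rw [sum_const, nsmul_eq_mul]
  have hcard : #(N i ∩ L) ≤ c := (card_le_card inter_subset_left).trans (hc i hi)
  exact mul_le_mul_of_nonneg_right (Nat.mono_cast hcard) (hv i hi)

lemma sum_card_incidence_le (hc : ∀ i ∈ S, #(N i) ≤ c) (L : Finset κ) :
    ∑ l ∈ L, #{i ∈ S | l ∈ N i} ≤ c * #S := by
  simpa using sum_sum_incidence_le (R := ℕ) (v := fun _ ↦ 1) hc (fun _ _ ↦ zero_le_one) L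

/- The threshold `θ` makes the induction work: removing a vertex of least weight `v i` raises the
threshold to `v i`. -/
lemma mul_sum_sub_le_sum_biUnion_sub [CommRing R] [LinearOrder R] [IsStrictOrderedRing R] {a : R}
    {v : ι → R} {g : κ → R} (hexp : ∀ S ⊆ T, a * #S ≤ #(S.biUnion N))
    (hvg : ∀ i ∈ T, ∀ l ∈ N i, v i ≤ g l) {θ : R} (hθ : ∀ i ∈ T, θ ≤ v i) :
    a * ∑ i ∈ T, (v i - θ) ≤ ∑ l ∈ T.biUnion N, (g l - θ) := by
  classical
  induction T using Finset.induction_on_min_value v generalizing θ with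
  | empty => simp
  | insert i T hi hmin ih =>
    have hleast : ∀ j ∈ insert i T, v i ≤ v j := by simpa using hmin
    have hrest : a * ∑ j ∈ insert i T, (v j - v i) ≤
        ∑ l ∈ (insert i T).biUnion N, (g l - v i) := by
      rw [sum_insert hi, sub_self, zero_add]
      refine (ih (fun S hS ↦ hexp S (hS.trans (subset_insert i T)))
        (fun j hj ↦ hvg j (mem_insert_of_mem hj)) hmin).trans ?_
      refine sum_le_sum_of_subset_of_nonneg
        (biUnion_subset_biUnion_of_subset_left _ (subset_insert i T)) fun l hl _ ↦ ?_
      obtain ⟨j, hj, hlj⟩ := mem_biUnion.1 hl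
      exact sub_nonneg.2 ((hleast j hj).trans (hvg j hj l hlj))
    have hslab := mul_le_mul_of_nonneg_right (hexp _ Subset.rfl)
      (sub_nonneg.2 (hθ i (mem_insert_self i T)))
    simp only [sum_sub_distrib, sum_const, nsmul_eq_mul] at hrest ⊢
    linear_combination hrest + hslab

lemma mul_sum_le_sum_biUnion [CommRing R] [LinearOrder R] [IsStrictOrderedRing R] {a : R}
    {v : ι → R} {g : κ → R} (hexp : ∀ S ⊆ T, a * #S ≤ #(S.biUnion N))
    (hvg : ∀ i ∈ T, ∀ l ∈ N i, v i ≤ g l) (hv : ∀ i ∈ T, 0 ≤ v i) :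
    a * ∑ i ∈ T, v i ≤ ∑ l ∈ T.biUnion N, g l := by
  simpa using mul_sum_sub_le_sum_biUnion_sub hexp hvg hv

end Expansion

section Peeling

variable {ι κ : Type*} [DecidableEq ι] [DecidableEq κ] {N : ι → Finset κ} {S T : Finset ι} {c : ℕ}
  {ε : ℝ}

/-- One round of peeling: the vertices of `S` without a unique neighbour, that is, all of whose
neighbours are shared with another vertex of `S`. -/
def peel (N : ι → Finset κ) (S : Finset ι) : Finset ι :=
  {i ∈ S | ∀ l ∈ N i, ∃ j ∈ S, j ≠ i ∧ l ∈ N j}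

lemma peel_subset : peel N S ⊆ S := filter_subset _ _

lemma exists_unique_neighbor_of_notMem_peel {i : ι} (hi : i ∈ S) (hi' : i ∉ peel N S) :
    ∃ l ∈ N i, ∀ j ∈ S, l ∈ N j → j = i := by
  simp only [peel, mem_filter, not_and, hi, true_implies] at hi'
  push Not at hi'
  exact hi'.imp fun l hl ↦ ⟨hl.1, fun j hj hlj ↦ by_contra fun hji ↦ hl.2 j hj hji hlj⟩

lemma iterate_peel_subset (r : ℕ) : (peel N)^[r] T ⊆ T := by
  induction r with
  | zero => exact Subset.rfl
  | succ r ih =>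
    rw [Function.iterate_succ_apply']
    exact peel_subset.trans ih

/- An element of `Γ(S)` either has two neighbours in `S` or is the unique neighbour of a peeled
vertex, so it is counted twice on the right of `htwice`. -/
lemma two_mul_card_biUnion_add_card_peel_le (hc : ∀ i ∈ S, #(N i) ≤ c) :
    2 * #(S.biUnion N) + c * #(peel N S) ≤ 2 * (c * #S) := by
  have htwice : ∀ l ∈ S.biUnion N, 2 ≤ #{i ∈ S | l ∈ N i} + #{i ∈ S \ peel N S | l ∈ N i} := by
    intro l hl
    obtain ⟨i, hi, hli⟩ := mem_biUnion.1 hl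
    by_cases hshared : ∃ j ∈ S, j ≠ i ∧ l ∈ N j
    · obtain ⟨j, hj, hji, hlj⟩ := hshared
      have : 1 < #{i ∈ S | l ∈ N i} :=
        one_lt_card.2 ⟨j, mem_filter.2 ⟨hj, hlj⟩, i, mem_filter.2 ⟨hi, hli⟩, hji⟩
      lia
    · have hpeeled : i ∉ peel N S := fun h ↦ hshared ((mem_filter.1 h).2 l hli)
      have : 0 < #{i ∈ S | l ∈ N i} := card_pos.2 ⟨i, mem_filter.2 ⟨hi, hli⟩⟩
      have : 0 < #{i ∈ S \ peel N S | l ∈ N i} :=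
        card_pos.2 ⟨i, mem_filter.2 ⟨mem_sdiff.2 ⟨hi, hpeeled⟩, hli⟩⟩
      lia
  have hcount : 2 * #(S.biUnion N) ≤ c * #S + c * #(S \ peel N S) := calc
    2 * #(S.biUnion N) = ∑ l ∈ S.biUnion N, 2 := by simp [mul_comm]
    _ ≤ ∑ l ∈ S.biUnion N, (#{i ∈ S | l ∈ N i} + #{i ∈ S \ peel N S | l ∈ N i}) :=
      sum_le_sum htwice
    _ ≤ c * #S + c * #(S \ peel N S) := by
      rw [sum_add_distrib]
      exact add_le_add (sum_card_incidence_le hc _)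
        (sum_card_incidence_le (fun i hi ↦ hc i (sdiff_subset hi)) _)
  have hsplit : c * #(S \ peel N S) + c * #(peel N S) = c * #S := by
    rw [← mul_add, card_sdiff_add_card_eq_card peel_subset]
  lia

lemma card_peel_le (hc0 : 0 < c) (hc : ∀ i ∈ S, #(N i) ≤ c)
    (hexp : (1 / 2 + ε) * c * #S ≤ #(S.biUnion N)) : (#(peel N S) : ℝ) ≤ (1 - 2 * ε) * #S := by
  have hcount : (2 * #(S.biUnion N) + c * #(peel N S) : ℝ) ≤ 2 * (c * #S) :=
    mod_cast two_mul_card_biUnion_add_card_peel_le hc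
  refine le_of_mul_le_mul_left ?_ (Nat.cast_pos.2 hc0)
  linarith

lemma card_iterate_peel_le (hc0 : 0 < c) (hc : ∀ i ∈ T, #(N i) ≤ c)
    (hexp : ∀ S ⊆ T, (1 / 2 + ε) * c * #S ≤ #(S.biUnion N)) (r : ℕ) :
    (#((peel N)^[r] T) : ℝ) ≤ Real.exp (-(2 * ε)) ^ r * #T := by
  induction r with
  | zero => simp
  | succ r ih =>
    have hsub : (peel N)^[r] T ⊆ T := iterate_peel_subset r
    rw [Function.iterate_succ_apply', pow_succ']
    calc (#(peel N ((peel N)^[r] T)) : ℝ)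
        ≤ (1 - 2 * ε) * #((peel N)^[r] T) :=
          card_peel_le hc0 (fun i hi ↦ hc i (hsub hi)) (hexp _ hsub)
      _ ≤ Real.exp (-(2 * ε)) * (Real.exp (-(2 * ε)) ^ r * #T) := by
          gcongr
          exact Real.one_sub_le_exp_neg _
      _ = Real.exp (-(2 * ε)) * Real.exp (-(2 * ε)) ^ r * #T := by ring

end Peeling

section Saturation

variable {ι κ : Type*} [DecidableEq κ] {N : ι → Finset κ} {S : Finset ι} {c k K : ℕ}

/-- `T` is saturated if every vertex outside `T` has at most half of its neighbours in `Γ(T)`. -/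
def IsSaturated (N : ι → Finset κ) (T : Finset ι) : Prop :=
  ∀ i ∉ T, #(N i ∩ T.biUnion N) ≤ #(N i \ T.biUnion N)

/- Adding a vertex violating saturation increases `2 * #Γ(S)` by at most `c`, so the bound on
`#Γ(S)` persists; expansion forbids reaching size `K` in this way. -/
lemma exists_isSaturated_superset_of_card_biUnion_le (hc : ∀ i, #(N i) ≤ c)
    (hK : ∀ U : Finset ι, #U = K → c * (k + K) < 2 * #(U.biUnion N)) (S : Finset ι)
    (hSK : #S < K) (hS : 2 * #(S.biUnion N) ≤ c * (k + #S)) :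
    ∃ T, S ⊆ T ∧ #T < K ∧ IsSaturated N T := by
  classical
  by_cases hsat : IsSaturated N S
  · exact ⟨S, Subset.rfl, hSK, hsat⟩
  obtain ⟨i, hiS, hi⟩ : ∃ i ∉ S, #(N i \ S.biUnion N) < #(N i ∩ S.biUnion N) := by
    simpa [IsSaturated] using hsat
  have hcard : #(insert i S) = #S + 1 := card_insert_of_notMem hiS
  have hgrowth : #((insert i S).biUnion N) = #(N i \ S.biUnion N) + #(S.biUnion N) := by
    rw [biUnion_insert, card_sdiff_add_card]
  have hdeg : #(N i ∩ S.biUnion N) + #(N i \ S.biUnion N) ≤ c :=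
    (card_inter_add_card_sdiff _ _).trans_le (hc i)
  have hinsert : 2 * #((insert i S).biUnion N) ≤ c * (k + #(insert i S)) := by
    rw [hgrowth, hcard, ← add_assoc, mul_add_one]
    lia
  have hlt : #(insert i S) < K := by
    refine lt_of_le_of_ne (by lia) fun h ↦ ?_
    have := hK _ h
    rw [h] at hinsert
    lia
  obtain ⟨T, hT, hTK, hTsat⟩ :=
    exists_isSaturated_superset_of_card_biUnion_le hc hK (insert i S) hlt hinsert
  exact ⟨T, (subset_insert i S).trans hT, hTK, hTsat⟩
termination_by K - #S
decreasing_by lia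

lemma exists_isSaturated_superset (hc : ∀ i, #(N i) ≤ c)
    (hK : ∀ U : Finset ι, #U = K → c * (k + K) < 2 * #(U.biUnion N)) (hS : #S ≤ k) :
    ∃ T, S ⊆ T ∧ #T < K ∧ IsSaturated N T := by
  have hΓ (U : Finset ι) : #(U.biUnion N) ≤ #U * c := card_biUnion_le_card_mul U N c fun i _ ↦ hc i
  have hSK : #S < K := by
    by_contra! hKS
    obtain ⟨U, -, hU⟩ := exists_subset_card_eq hKS
    have hUK := hK U hU
    have hUc := hΓ U
    rw [hU] at hUc
    nlinarith
  refine exists_isSaturated_superset_of_card_biUnion_le hc hK S hSK ?_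
  nlinarith [hΓ S]

end Saturation

section LocalRecursion

variable {ι κ : Type*} [Fintype ι] [DecidableEq ι] [DecidableEq κ] {N : ι → Finset κ}
  {T : Finset ι} {w : ℕ → ι → ℝ} {c d : ℕ} {ε B Δ : ℝ}

/-- A decreasing sequence of nonnegative error vectors in which the next error at `i` is controlled,
through any neighbour `l` of `i`, by the current errors at the other vertices adjacent to `l`. -/
structure IsLocalErrorSeq (N : ι → Finset κ) (w : ℕ → ι → ℝ) : Prop where
  nonneg : ∀ t, 0 ≤ w t
  antitone : Antitone w
  succ_le : ∀ t i, ∀ l ∈ N i, w (t + 1) i ≤ ∑ j ∈ ({j | l ∈ N j} : Finset ι).erase i, w t j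

/-- The noise that the weights `z` outside `T` cause at `l`. -/
def noise (N : ι → Finset κ) (T : Finset ι) (z : ι → ℝ) (l : κ) : ℝ :=
  ∑ j ∈ Tᶜ with l ∈ N j, z j

lemma noise_nonneg {z : ι → ℝ} (hz : 0 ≤ z) (l : κ) : 0 ≤ noise N T z l :=
  sum_nonneg fun j _ ↦ hz j

lemma sum_erase_eq_sum_erase_add_noise {i : ι} {l : κ} (hi : i ∈ T) (hl : l ∈ N i) (z : ι → ℝ) :
    ∑ j ∈ ({j | l ∈ N j} : Finset ι).erase i, z j =
      ∑ j ∈ {j ∈ T | l ∈ N j}.erase i, z j + noise N T z l := by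
  have hsplit : ∑ j with l ∈ N j, z j = ∑ j ∈ T with l ∈ N j, z j + noise N T z l := by
    simp only [noise, sum_filter, sum_add_sum_compl]
  rw [sum_erase_eq_sub (by simpa using hl), sum_erase_eq_sub (mem_filter.2 ⟨hi, hl⟩), hsplit]
  ring

lemma noise_le_pred_mul_noise {x : ι → ℝ} (hx : 0 ≤ x) {l : κ} (hd : #{i | l ∈ N i} ≤ d)
    (hl : l ∈ T.biUnion N) : noise N T x l ≤ (d - 1) * noise N T x l := by
  obtain hnone | ⟨j, hj⟩ := ({j ∈ Tᶜ | l ∈ N j} : Finset ι).eq_empty_or_nonempty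
  · simp [noise, hnone]
  · obtain ⟨hjT, hlj⟩ := mem_filter.1 hj
    obtain ⟨i, hi, hli⟩ := mem_biUnion.1 hl
    have hij : i ≠ j := fun h ↦ mem_compl.1 hjT (h ▸ hi)
    have htwo : 1 < #{i | l ∈ N i} := one_lt_card.2 ⟨i, by simpa, j, by simpa, hij⟩
    have hd2 : (2 : ℝ) ≤ d := mod_cast htwo.trans_le hd
    exact le_mul_of_one_le_left (noise_nonneg hx l) (by linarith)

lemma noise_eq_sum_of_notMem_biUnion {l : κ} (hl : l ∉ T.biUnion N) (x : ι → ℝ) :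
    noise N T x l = ∑ j with l ∈ N j, x j := by
  have hout : ∀ j, l ∈ N j → j ∉ T := fun j hlj hj ↦ hl (mem_biUnion.2 ⟨j, hj, hlj⟩)
  refine sum_congr (Finset.ext fun j ↦ ?_) fun _ _ ↦ rfl
  simpa using hout j

lemma noise_sub_le {x z : ι → ℝ} (hx : 0 ≤ x) {l : κ} (hd : #{i | l ∈ N i} ≤ d)
    (hz : ∀ i, l ∈ N i → z i ≤ ∑ j with l ∈ N j, x j) (hl : l ∉ T.biUnion N) :
    noise N T (z - x) l ≤ (d - 1) * noise N T x l := by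
  rw [noise_eq_sum_of_notMem_biUnion hl, noise_eq_sum_of_notMem_biUnion hl]
  calc ∑ i with l ∈ N i, (z - x) i
      ≤ ∑ i with l ∈ N i, (∑ j with l ∈ N j, x j - x i) :=
        sum_le_sum fun i hi ↦ sub_le_sub_right (hz i (mem_filter.1 hi).2) _
    _ = (#{i | l ∈ N i} - 1) * ∑ j with l ∈ N j, x j := by
        rw [sum_sub_distrib, sum_const, nsmul_eq_mul, sub_one_mul]
    _ ≤ (d - 1) * ∑ j with l ∈ N j, x j := by
        gcongr
        exact sum_nonneg fun j _ ↦ hx j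

namespace IsSaturated

variable {x z : ι → ℝ}

lemma sum_noise_le_sum_sdiff_noise (hT : IsSaturated N T) (hz : 0 ≤ z) :
    ∑ l ∈ T.biUnion N, noise N T z l ≤ ∑ l ∈ univ.biUnion N \ T.biUnion N, noise N T z l := by
  simp only [noise, sum_sum_incidence_comm N Tᶜ, sum_const]
  refine sum_le_sum fun i hi ↦ nsmul_le_nsmul_left (hz i) ?_
  rw [← inter_sdiff_assoc, inter_eq_left.2 (subset_biUnion_of_mem N (mem_univ i))]
  exact hT i (mem_compl.1 hi)

lemma sum_noise_le (hT : IsSaturated N T) (hc : ∀ i, #(N i) ≤ c) (hd0 : 0 < d)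
    (hd : ∀ l, #{i | l ∈ N i} ≤ d) (hx : 0 ≤ x) (hxz : x ≤ z)
    (hz : ∀ i, ∀ l ∈ N i, z i ≤ ∑ j with l ∈ N j, x j) :
    ∑ l ∈ T.biUnion N, noise N T z l ≤ (d - 1) * (c * ∑ i ∈ Tᶜ, x i) := by
  have hexact : ∑ l ∈ T.biUnion N, noise N T x l ≤
      (d - 1) * ∑ l ∈ T.biUnion N, noise N T x l := by
    rw [mul_sum]
    exact sum_le_sum fun l hl ↦ noise_le_pred_mul_noise hx (hd l) hl
  have hexcess : ∑ l ∈ T.biUnion N, noise N T (z - x) l ≤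
      (d - 1) * ∑ l ∈ univ.biUnion N \ T.biUnion N, noise N T x l := by
    refine (hT.sum_noise_le_sum_sdiff_noise (sub_nonneg.2 hxz)).trans ?_
    rw [mul_sum]
    exact sum_le_sum fun l hl ↦ noise_sub_le hx (hd l) (fun i ↦ hz i l) (mem_sdiff.1 hl).2
  have hd1 : (1 : ℝ) ≤ d := mod_cast hd0
  calc ∑ l ∈ T.biUnion N, noise N T z l
      = ∑ l ∈ T.biUnion N, noise N T x l + ∑ l ∈ T.biUnion N, noise N T (z - x) l := by
        simp [noise]
    _ ≤ (d - 1) * ∑ l ∈ univ.biUnion N, noise N T x l := by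
        rw [← sum_sdiff (biUnion_subset_biUnion_of_subset_left N (subset_univ T))]
        linarith
    _ ≤ (d - 1) * (c * ∑ i ∈ Tᶜ, x i) :=
        mul_le_mul_of_nonneg_left
          (sum_sum_incidence_le (fun i _ ↦ hc i) (fun i _ ↦ hx i) _) (by linarith)

end IsSaturated

namespace IsLocalErrorSeq

lemma succ_le_add_noise (hw : IsLocalErrorSeq N w) (t : ℕ) {i : ι} (hi : i ∈ T) {l : κ}
    (hl : l ∈ N i) :
    w (t + 1) i ≤ ∑ j ∈ {j ∈ T | l ∈ N j}.erase i, w t j + noise N T (w 0) l := by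
  refine (hw.succ_le t i l hl).trans ?_
  rw [sum_erase_eq_sum_erase_add_noise hi hl]
  gcongr
  exact sum_le_sum fun j _ ↦ hw.antitone (Nat.zero_le t) j

lemma succ_le_mul_of_forall_le (hw : IsLocalErrorSeq N w) (hd : ∀ l, #{i | l ∈ N i} ≤ d)
    {M : ℝ} (hM : 0 ≤ M) {t : ℕ} {i : ι} (hi : i ∈ T) {l : κ} (hl : l ∈ N i)
    (hothers : ∀ j ∈ T, l ∈ N j → j ≠ i → w t j ≤ M) (hnoise : noise N T (w 0) l ≤ M) :
    w (t + 1) i ≤ d * M := by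
  have hcard : #({j ∈ T | l ∈ N j}.erase i) + 1 ≤ d := by
    rw [card_erase_add_one (mem_filter.2 ⟨hi, hl⟩)]
    exact (card_le_card (filter_subset_filter _ (subset_univ T))).trans (hd l)
  calc w (t + 1) i ≤ ∑ j ∈ {j ∈ T | l ∈ N j}.erase i, w t j + noise N T (w 0) l :=
        hw.succ_le_add_noise t hi hl
    _ ≤ #({j ∈ T | l ∈ N j}.erase i) • M + M := by
        refine add_le_add (sum_le_card_nsmul _ _ _ fun j hj ↦ ?_) hnoise
        obtain ⟨hji, hj⟩ := mem_erase.1 hj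
        exact hothers j (mem_filter.1 hj).1 (mem_filter.1 hj).2 hji
    _ = ((#({j ∈ T | l ∈ N j}.erase i) + 1 : ℕ) : ℝ) * M := by
        rw [← succ_nsmul, nsmul_eq_mul]
    _ ≤ d * M := mul_le_mul_of_nonneg_right (mod_cast hcard) hM

lemma le_pow_mul_of_notMem_iterate_peel (hw : IsLocalErrorSeq N w) (hd0 : 0 < d)
    (hd : ∀ l, #{i | l ∈ N i} ≤ d) (hB0 : 0 ≤ B)
    (hB : ∀ l ∈ T.biUnion N, noise N T (w 0) l ≤ B) (r : ℕ) {i : ι} (hiT : i ∈ T)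
    (hi : i ∉ (peel N)^[r] T) : w r i ≤ (d : ℝ) ^ r * B := by
  induction r generalizing i with
  | zero => exact absurd hiT hi
  | succ r ih =>
    have hd1 : (1 : ℝ) ≤ d := mod_cast hd0
    have hM : 0 ≤ (d : ℝ) ^ r * B := by positivity
    rw [pow_succ', mul_assoc]
    by_cases hiS : i ∈ (peel N)^[r] T
    · rw [Function.iterate_succ_apply'] at hi
      obtain ⟨l, hl, hunique⟩ := exists_unique_neighbor_of_notMem_peel hiS hi
      refine hw.succ_le_mul_of_forall_le hd hM hiT hl
        (fun j hj hlj hji ↦ ih hj fun hjS ↦ hji (hunique j hjS hlj)) ?_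
      exact (hB l (mem_biUnion.2 ⟨i, hiT, hl⟩)).trans
        (le_mul_of_one_le_left hB0 (one_le_pow₀ hd1))
    · exact ((hw.antitone (Nat.le_succ r) i).trans (ih hiT hiS)).trans
        (le_mul_of_one_le_left hM hd1)

lemma sum_succ_le (hw : IsLocalErrorSeq N w) (hc : ∀ i ∈ T, #(N i) ≤ c)
    (hexp : ∀ S ⊆ T, (1 / 2 + ε) * c * #S ≤ #(S.biUnion N)) (t : ℕ) :
    (1 + 2 * ε) * (c * ∑ i ∈ T, w (t + 1) i) ≤
      c * ∑ i ∈ T, w t i + ∑ l ∈ T.biUnion N, noise N T (w 0) l := by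
  have hvg : ∀ i ∈ T, ∀ l ∈ N i,
      w (t + 1) i ≤ (∑ j ∈ T with l ∈ N j, w t j + noise N T (w 0) l) / 2 := by
    intro i hi l hl
    have hothers := hw.succ_le_add_noise t hi hl
    rw [sum_erase_eq_sub (mem_filter.2 ⟨hi, hl⟩)] at hothers
    have hself : w (t + 1) i ≤ w t i := hw.antitone (Nat.le_succ t) i
    linarith
  have hexpand := mul_sum_le_sum_biUnion hexp hvg fun i _ ↦ hw.nonneg (t + 1) i
  rw [← sum_div, sum_add_distrib] at hexpand
  have hcount := sum_sum_incidence_le hc (fun i _ ↦ hw.nonneg t i) (T.biUnion N)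
  linarith

lemma le_pow_mul (hw : IsLocalErrorSeq N w) (hc0 : 0 < c) (hc : ∀ i ∈ T, #(N i) ≤ c) (hd0 : 0 < d)
    (hd : ∀ l, #{i | l ∈ N i} ≤ d) (hexp : ∀ S ⊆ T, (1 / 2 + ε) * c * #S ≤ #(S.biUnion N))
    (hB : ∑ l ∈ T.biUnion N, noise N T (w 0) l ≤ B) {r : ℕ}
    (hr : Real.exp (-(2 * ε)) ^ r * #T < 1) {i : ι} (hi : i ∈ T) : w r i ≤ (d : ℝ) ^ r * B := by
  have hnoise : ∀ l ∈ T.biUnion N, 0 ≤ noise N T (w 0) l := fun l _ ↦ noise_nonneg (hw.nonneg 0) l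
  have hpeeled : (peel N)^[r] T = ∅ := by
    have hcard : (#((peel N)^[r] T) : ℝ) < 1 := (card_iterate_peel_le hc0 hc hexp r).trans_lt hr
    exact card_eq_zero.1 (Nat.lt_one_iff.1 (mod_cast hcard))
  refine hw.le_pow_mul_of_notMem_iterate_peel hd0 hd ((sum_nonneg hnoise).trans hB)
    (fun l hl ↦ (single_le_sum hnoise hl).trans hB) r hi ?_
  rw [hpeeled]
  exact notMem_empty i

lemma pow_mul_sum_sub_le (hw : IsLocalErrorSeq N w) (hc0 : 0 < c) (hc : ∀ i ∈ T, #(N i) ≤ c)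
    (hε : 0 < ε) (hexp : ∀ S ⊆ T, (1 / 2 + ε) * c * #S ≤ #(S.biUnion N))
    (hB : ∑ l ∈ T.biUnion N, noise N T (w 0) l ≤ c * B) (r s : ℕ) :
    (1 + 2 * ε) ^ s * (∑ i ∈ T, w (r + s) i - B / (2 * ε)) ≤
      ∑ i ∈ T, w r i - B / (2 * ε) := by
  have hfixed : 2 * ε * (B / (2 * ε)) = B := mul_div_cancel₀ B (by positivity)
  have hstep (t : ℕ) : (1 + 2 * ε) * (∑ i ∈ T, w (r + (t + 1)) i - B / (2 * ε)) ≤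
      ∑ i ∈ T, w (r + t) i - B / (2 * ε) := by
    have hcontract : c * ((1 + 2 * ε) * ∑ i ∈ T, w (r + t + 1) i) ≤
        c * (∑ i ∈ T, w (r + t) i + B) := by
      linarith [hw.sum_succ_le hc hexp (r + t)]
    have := le_of_mul_le_mul_left hcontract (Nat.cast_pos.2 hc0)
    rw [← add_assoc]
    linarith
  induction s with
  | zero => simp
  | succ s ih =>
    rw [pow_succ, mul_assoc]
    exact (mul_le_mul_of_nonneg_left (hstep s) (by positivity)).trans ih

lemma sum_le (hw : IsLocalErrorSeq N w) (hc0 : 0 < c) (hc : ∀ i ∈ T, #(N i) ≤ c) (hd0 : 0 < d)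
    (hd : ∀ l, #{i | l ∈ N i} ≤ d) (hε : 0 < ε)
    (hexp : ∀ S ⊆ T, (1 / 2 + ε) * c * #S ≤ #(S.biUnion N)) (hΔ : 0 ≤ Δ)
    (hnoise : ∑ l ∈ T.biUnion N, noise N T (w 0) l ≤ (d - 1) * (c * Δ)) {r s : ℕ}
    (hr : Real.exp (-(2 * ε)) ^ r * #T < 1)
    (hs : 2 * ε * #T * (c * d ^ (r + 1)) ≤ (1 + 2 * ε) ^ s) :
    ∑ i ∈ T, w (r + s) i ≤ d / (2 * ε) * Δ := by
  have hd1 : (1 : ℝ) ≤ d := mod_cast hd0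
  have hpeeled : ∑ i ∈ T, w r i ≤ (1 + 2 * ε) ^ s * (Δ / (2 * ε)) := calc
    ∑ i ∈ T, w r i ≤ #T • ((d : ℝ) ^ r * ((d - 1) * (c * Δ))) :=
      sum_le_card_nsmul _ _ _ fun i hi ↦ hw.le_pow_mul hc0 hc hd0 hd hexp hnoise hr hi
    _ ≤ #T • ((d : ℝ) ^ r * (d * (c * Δ))) := by
      gcongr
      exact sub_le_self _ zero_le_one
    _ = 2 * ε * #T * (c * d ^ (r + 1)) * (Δ / (2 * ε)) := by
      rw [nsmul_eq_mul]
      field_simp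
      ring
    _ ≤ (1 + 2 * ε) ^ s * (Δ / (2 * ε)) := by gcongr
  have hcontract : (1 + 2 * ε) ^ s * (∑ i ∈ T, w (r + s) i - (d - 1) * Δ / (2 * ε)) ≤
      (1 + 2 * ε) ^ s * (Δ / (2 * ε)) := by
    refine (hw.pow_mul_sum_sub_le hc0 hc hε hexp (hnoise.trans_eq (by ring)) r s).trans ?_
    refine (sub_le_self _ ?_).trans hpeeled
    exact div_nonneg (mul_nonneg (by linarith) hΔ) (by positivity)
  have hexcess := le_of_mul_le_mul_left hcontract (by positivity)
  calc ∑ i ∈ T, w (r + s) i ≤ (d - 1) * Δ / (2 * ε) + Δ / (2 * ε) := by linarith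
    _ = d / (2 * ε) * Δ := by ring

end IsLocalErrorSeq

end LocalRecursion

section MessagePassing

variable {n m : ℕ} {A : Fin m → Fin n → Bool} {x z : Fin n → ℝ}

/-- The update at odd times: the least incoming check message. -/
noncomputable def minUpdate (A : Fin m → Fin n → Bool) (x z : Fin n → ℝ) (i : Fin n) : ℝ :=
  sInf ((fun l ↦ msgY A x z l i) '' (nhdX A i : Set (Fin m)))

/-- The update at even positive times: the positive part of the largest incoming check message. -/
noncomputable def maxUpdate (A : Fin m → Fin n → Bool) (x z : Fin n → ℝ) (i : Fin n) : ℝ :=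
  max 0 (sSup ((fun l ↦ msgY A x z l i) '' (nhdX A i : Set (Fin m))))

lemma filter_mem_nhdX (l : Fin m) : ({i | l ∈ nhdX A i} : Finset (Fin n)) = nhdY A l := by
  simp [nhdX, nhdY]

lemma mem_nhdY_iff_mem_nhdX {i : Fin n} {l : Fin m} : i ∈ nhdY A l ↔ l ∈ nhdX A i := by
  simp [nhdX, nhdY]

lemma xhat_odd (t : ℕ) : xhat A x (2 * t + 1) = minUpdate A x (xhat A x (2 * t)) := by
  funext i
  simp [xhat, minUpdate]

lemma xhat_even_succ (t : ℕ) :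
    xhat A x (2 * (t + 1)) = maxUpdate A x (xhat A x (2 * t + 1)) := by
  funext i
  have heven : Even (2 * t + 1 + 1) := ⟨t + 1, by ring⟩
  simp only [mul_add_one, xhat, if_pos heven, maxUpdate]

lemma msgY_antitone (l : Fin m) (i : Fin n) : Antitone fun z ↦ msgY A x z l i :=
  fun _ _ h ↦ sub_le_sub_left (sum_le_sum fun k _ ↦ h k) _

lemma msgY_self {l : Fin m} {i : Fin n} (hl : l ∈ nhdX A i) : msgY A x x l i = x i := by
  rw [msgY, yvec, ← add_sum_erase _ _ (mem_nhdY_iff_mem_nhdX.2 hl), add_sub_cancel_right]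

lemma minUpdate_antitone : Antitone (minUpdate A x) := by
  intro z z' h i
  simp only [minUpdate, sInf_image']
  exact ciInf_mono (Set.finite_range _).bddBelow fun l ↦ msgY_antitone l.1 i h

lemma maxUpdate_antitone : Antitone (maxUpdate A x) := by
  intro z z' h i
  simp only [maxUpdate, sSup_image']
  exact max_le_max_left 0 <| ciSup_mono (Set.finite_range _).bddAbove fun l ↦ msgY_antitone l.1 i h

lemma image_msgY_self {i : Fin n} (hi : (nhdX A i).Nonempty) :
    (fun l ↦ msgY A x x l i) '' (nhdX A i : Set (Fin m)) = {x i} := by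
  rw [Set.image_congr fun l hl ↦ msgY_self hl]
  exact Set.Nonempty.image_const hi (x i)

lemma minUpdate_self (hA : ∀ i, (nhdX A i).Nonempty) : minUpdate A x x = x := by
  funext i
  rw [minUpdate, image_msgY_self (hA i), csInf_singleton]

lemma maxUpdate_self (hA : ∀ i, (nhdX A i).Nonempty) (hx : 0 ≤ x) : maxUpdate A x x = x := by
  funext i
  rw [maxUpdate, image_msgY_self (hA i), csSup_singleton]
  exact max_eq_right (hx i)

lemma minUpdate_le_msgY {l : Fin m} {i : Fin n} (hl : l ∈ nhdX A i) :
    minUpdate A x z i ≤ msgY A x z l i :=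
  csInf_le (Set.toFinite _).bddBelow ⟨l, hl, rfl⟩

lemma msgY_le_maxUpdate {l : Fin m} {i : Fin n} (hl : l ∈ nhdX A i) :
    msgY A x z l i ≤ maxUpdate A x z i :=
  le_max_of_le_right (le_csSup (Set.toFinite _).bddAbove ⟨l, hl, rfl⟩)

lemma xhat_zero : xhat A x 0 = 0 := by
  funext
  simp [xhat]

lemma xhat_even_monotone : Monotone fun t ↦ xhat A x (2 * t) := by
  refine monotone_nat_of_le_succ fun t ↦ ?_
  induction t with
  | zero =>
    rw [mul_zero, xhat_zero, xhat_even_succ]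
    exact fun _ ↦ le_max_left _ _
  | succ t ih =>
    rw [xhat_even_succ t, xhat_even_succ (t + 1), xhat_odd, xhat_odd]
    exact maxUpdate_antitone (minUpdate_antitone ih)

lemma xhat_odd_antitone : Antitone fun t ↦ xhat A x (2 * t + 1) := by
  intro s t h
  simp only [xhat_odd]
  exact minUpdate_antitone (xhat_even_monotone h)

lemma xhat_even_nonneg (t : ℕ) : 0 ≤ xhat A x (2 * t) :=
  xhat_zero.ge.trans (xhat_even_monotone (Nat.zero_le t))

lemma le_xhat_odd_of_xhat_even_le (hA : ∀ i, (nhdX A i).Nonempty) {t : ℕ}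
    (h : xhat A x (2 * t) ≤ x) : x ≤ xhat A x (2 * t + 1) :=
  calc x = minUpdate A x x := (minUpdate_self hA).symm
    _ ≤ minUpdate A x (xhat A x (2 * t)) := minUpdate_antitone h
    _ = xhat A x (2 * t + 1) := (xhat_odd t).symm

lemma xhat_even_le (hA : ∀ i, (nhdX A i).Nonempty) (hx : 0 ≤ x) (t : ℕ) :
    xhat A x (2 * t) ≤ x := by
  induction t with
  | zero => exact xhat_zero.trans_le hx
  | succ t ih =>
    calc xhat A x (2 * (t + 1)) = maxUpdate A x (xhat A x (2 * t + 1)) := xhat_even_succ t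
      _ ≤ maxUpdate A x x := maxUpdate_antitone (le_xhat_odd_of_xhat_even_le hA ih)
      _ = x := maxUpdate_self hA hx

lemma le_xhat_odd (hA : ∀ i, (nhdX A i).Nonempty) (hx : 0 ≤ x) (t : ℕ) :
    x ≤ xhat A x (2 * t + 1) :=
  le_xhat_odd_of_xhat_even_le hA (xhat_even_le hA hx t)

/-- The width of the enclosure `x̂^(2t) ≤ x ≤ x̂^(2t+1)`. -/
noncomputable def width (A : Fin m → Fin n → Bool) (x : Fin n → ℝ) (t : ℕ) : Fin n → ℝ :=
  xhat A x (2 * t + 1) - xhat A x (2 * t)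

lemma width_zero : width A x 0 = xhat A x 1 := by
  simp [width, xhat_zero]

lemma width_antitone : Antitone (width A x) :=
  fun _ _ h ↦ sub_le_sub (xhat_odd_antitone h) (xhat_even_monotone h)

lemma width_succ_le (t : ℕ) {l : Fin m} {i : Fin n} (hl : l ∈ nhdX A i) :
    width A x (t + 1) i ≤ ∑ j ∈ (nhdY A l).erase i, width A x t j := by
  calc width A x (t + 1) i
      ≤ msgY A x (xhat A x (2 * (t + 1))) l i - msgY A x (xhat A x (2 * t + 1)) l i := by
        rw [width, Pi.sub_apply, xhat_odd (t + 1)]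
        nth_rewrite 2 [xhat_even_succ]
        exact sub_le_sub (minUpdate_le_msgY hl) (msgY_le_maxUpdate hl)
    _ = ∑ j ∈ (nhdY A l).erase i, (xhat A x (2 * t + 1) j - xhat A x (2 * (t + 1)) j) := by
        rw [msgY, msgY, sub_sub_sub_cancel_left, sum_sub_distrib]
    _ ≤ ∑ j ∈ (nhdY A l).erase i, width A x t j :=
        sum_le_sum fun j _ ↦ sub_le_sub_left (xhat_even_monotone (Nat.le_succ t) j) _

lemma isLocalErrorSeq_width (hA : ∀ i, (nhdX A i).Nonempty) (hx : 0 ≤ x) :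
    IsLocalErrorSeq (nhdX A) (width A x) where
  nonneg t := sub_nonneg.2 ((xhat_even_le hA hx t).trans (le_xhat_odd hA hx t))
  antitone := width_antitone
  succ_le t _ _ hl := by
    rw [filter_mem_nhdX]
    exact width_succ_le t hl

lemma width_zero_le_yvec {l : Fin m} {i : Fin n} (hl : l ∈ nhdX A i) :
    width A x 0 i ≤ yvec A x l := calc
  width A x 0 i = minUpdate A x 0 i := by rw [width_zero, ← xhat_zero (A := A) (x := x), xhat_odd 0]
  _ ≤ msgY A x 0 l i := minUpdate_le_msgY hl
  _ = yvec A x l := by simp [msgY]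

end MessagePassing

section PhaseLengths

variable {c d k δ b : ℝ} {r s t : ℕ}

lemma exp_neg_pow_mul_lt (hδ : 0 < δ) (hk : 0 ≤ k)
    (hr : (1 + |Real.log δ|) / δ * (1 + Real.log (k + 1)) ≤ r) : Real.exp (-δ) ^ r * k < δ := by
  have hlogk : 0 ≤ Real.log (k + 1) := Real.log_nonneg (by linarith)
  have hexponent : Real.log (k + 1) - δ * r < Real.log δ := by
    have hrδ : (1 + |Real.log δ|) * (1 + Real.log (k + 1)) ≤ δ * r := by
      rwa [div_mul_eq_mul_div, div_le_iff₀' hδ] at hr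
    have hprod : 0 ≤ |Real.log δ| * Real.log (k + 1) := by positivity
    linarith [neg_abs_le (Real.log δ)]
  calc Real.exp (-δ) ^ r * k ≤ Real.exp (-δ) ^ r * (k + 1) := by
        gcongr
        exact le_add_of_nonneg_right zero_le_one
    _ = Real.exp (Real.log (k + 1) - δ * r) := by
        rw [sub_eq_add_neg, Real.exp_add, Real.exp_log (by positivity), ← Real.exp_nat_mul,
          mul_comm, mul_neg, mul_comm δ]
    _ < Real.exp (Real.log δ) := Real.exp_lt_exp.2 hexponent
    _ = δ := Real.exp_log hδ

lemma mul_mul_pow_le_one_add_pow (hδ : 0 < δ) (hc : 1 ≤ c) (hd : 1 ≤ d) (hk : 0 ≤ k)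
    (hr : r + 1 ≤ b * (1 + Real.log (k + 1)))
    (hs : (b + 1) * ((1 + Real.log (k + 1)) * (1 + Real.log (c * d))) ≤ s * Real.log (1 + δ)) :
    k * (c * d ^ (r + 1)) ≤ (1 + δ) ^ s := by
  have hlogk : 0 ≤ Real.log (k + 1) := Real.log_nonneg (by linarith)
  have hlogc : 0 ≤ Real.log c := Real.log_nonneg hc
  have hlogd : 0 ≤ Real.log d := Real.log_nonneg hd
  have hlogcd : Real.log (c * d) = Real.log c + Real.log d :=
    Real.log_mul (by positivity) (by positivity)
  have hlogcd0 : 0 ≤ Real.log (c * d) := hlogcd.ge.trans' (add_nonneg hlogc hlogd)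
  have hdegrees : Real.log c + (r + 1) * Real.log d ≤
      b * ((1 + Real.log (k + 1)) * (1 + Real.log (c * d))) := calc
    Real.log c + (r + 1) * Real.log d ≤ (r + 1) * (1 + Real.log (c * d)) := by
      rw [hlogcd]
      linarith [mul_nonneg r.cast_nonneg hlogc, r.cast_nonneg (α := ℝ)]
    _ ≤ b * (1 + Real.log (k + 1)) * (1 + Real.log (c * d)) := by gcongr
    _ = b * ((1 + Real.log (k + 1)) * (1 + Real.log (c * d))) := mul_assoc _ _ _
  have hsparsity : Real.log (k + 1) ≤ (1 + Real.log (k + 1)) * (1 + Real.log (c * d)) := by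
    have : 0 ≤ Real.log (k + 1) * Real.log (c * d) := by positivity
    linarith
  calc k * (c * d ^ (r + 1)) ≤ (k + 1) * (c * d ^ (r + 1)) := by
        gcongr
        exact le_add_of_nonneg_right zero_le_one
    _ ≤ (1 + δ) ^ s := by
        rw [← Real.log_le_log_iff (by positivity) (by positivity), Real.log_pow,
          Real.log_mul (by positivity) (by positivity),
          Real.log_mul (by positivity) (by positivity), Real.log_pow]
        push_cast
        linarith

lemma exists_phase_lengths (hδ : 0 < δ) :
    ∃ C : ℝ, 0 < C ∧ ∀ (c d k : ℝ) (t : ℕ), 1 ≤ c → 1 ≤ d → 0 ≤ k →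
      C * (1 + Real.log (k + 1)) * (1 + Real.log (c * d)) ≤ t →
      ∃ r s, t = r + s ∧ Real.exp (-δ) ^ r * k < δ ∧ k * (c * d ^ (r + 1)) ≤ (1 + δ) ^ s := by
  have hL : 0 < Real.log (1 + δ) := Real.log_pos (by linarith)
  set a : ℝ := (1 + |Real.log δ|) / δ
  have ha : 0 ≤ a := by positivity
  refine ⟨a + 2 + (a + 2 + 1) / Real.log (1 + δ), by positivity, fun c d k t hc hd hk ht ↦ ?_⟩
  set K : ℝ := 1 + Real.log (k + 1)
  set P : ℝ := 1 + Real.log (c * d)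
  have hK : 1 ≤ K := le_add_of_nonneg_right (Real.log_nonneg (by linarith))
  have hP : 1 ≤ P := le_add_of_nonneg_right (Real.log_nonneg (one_le_mul_of_one_le_of_one_le hc hd))
  set r := ⌈a * K⌉₊
  have hr : (r + 1 : ℝ) ≤ (a + 2) * K := by
    linarith [Nat.ceil_lt_add_one (mul_nonneg ha (zero_le_one.trans hK))]
  have hrt : (r : ℝ) + (a + 2 + 1) / Real.log (1 + δ) * (K * P) ≤ t := by
    have hKP : (a + 2) * K ≤ (a + 2) * K * P := le_mul_of_one_le_right (by positivity) hP
    linarith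
  obtain ⟨s, rfl⟩ := Nat.exists_eq_add_of_le
    (Nat.cast_le.1 ((le_add_of_nonneg_right (by positivity)).trans hrt) : r ≤ t)
  refine ⟨r, s, rfl, exp_neg_pow_mul_lt hδ hk (Nat.le_ceil _),
    mul_mul_pow_le_one_add_pow hδ hc hd hk hr ?_⟩
  rw [Nat.cast_add, add_le_add_iff_left, div_mul_eq_mul_div, div_le_iff₀ hL] at hrt
  exact hrt

end PhaseLengths

section Recovery

variable {n m : ℕ} {A : Fin m → Fin n → Bool} {x : Fin n → ℝ} {c d k : ℕ} {ε : ℝ}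

lemma IsExpander.nhdX_nonempty {K : ℕ} {α : ℝ} (hA : IsExpander A c K α) (hc0 : 0 < c)
    (hK : 0 < K) (hα : 0 < α) (i : Fin n) : (nhdX A i).Nonempty := by
  have hi : α * c ≤ (#(nhdX A i) : ℝ) := by
    simpa [Gam] using hA {i} ((card_singleton i).trans_le hK)
  exact card_pos.1 (Nat.cast_pos.1 (hi.trans_lt' (by positivity)))

lemma IsExpander.exists_isSaturated_superset (hε : 0 < ε) (hc0 : 0 < c)
    (hc : ∀ i, #(nhdX A i) ≤ c)
    (hA : IsExpander A c ⌊(k : ℝ) / (2 * ε) + 1⌋₊ (1 / 2 + ε)) {S : Finset (Fin n)} (hS : #S ≤ k) :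
    ∃ T, S ⊆ T ∧ 2 * ε * #T ≤ k ∧ IsSaturated (nhdX A) T ∧
      ∀ U ⊆ T, (1 / 2 + ε) * c * #U ≤ #(U.biUnion (nhdX A)) := by
  set K := ⌊(k : ℝ) / (2 * ε) + 1⌋₊
  have hkK : (k : ℝ) < 2 * ε * K := by
    have hfloor : (k : ℝ) / (2 * ε) + 1 < K + 1 := Nat.lt_floor_add_one _
    rw [← div_lt_iff₀' (by positivity)]
    linarith
  have hgrow (U : Finset (Fin n)) (hU : #U = K) : c * (k + K) < 2 * #(U.biUnion (nhdX A)) := by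
    have hexp : (1 / 2 + ε) * c * K ≤ #(U.biUnion (nhdX A)) := by
      simpa only [hU, Gam] using hA U hU.le
    have hck : (c : ℝ) * k < c * (2 * ε * K) := mul_lt_mul_of_pos_left hkK (Nat.cast_pos.2 hc0)
    have : (c * (k + K) : ℝ) < 2 * #(U.biUnion (nhdX A)) := by linarith
    exact_mod_cast this
  obtain ⟨T, hST, hTK, hT⟩ := MP.exists_isSaturated_superset hc hgrow hS
  refine ⟨T, hST, ?_, hT, fun U hU ↦ hA U ((card_le_card hU).trans hTK.le)⟩
  have hfloor : (K : ℝ) ≤ k / (2 * ε) + 1 := Nat.floor_le (by positivity)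
  have hTK' : (#T + 1 : ℝ) ≤ K := mod_cast hTK
  rw [← le_div_iff₀' (by positivity)]
  linarith

theorem l1_sub_xhat_le_sum_compl (hε : 0 < ε) (hc0 : 0 < c) (hd0 : 0 < d)
    (hc : ∀ i, #(nhdX A i) ≤ c) (hd : ∀ l, #(nhdY A l) ≤ d)
    (hA : IsExpander A c ⌊(k : ℝ) / (2 * ε) + 1⌋₊ (1 / 2 + ε)) (hx : 0 ≤ x) {S : Finset (Fin n)}
    (hS : #S ≤ k) {r s : ℕ} (hr : Real.exp (-(2 * ε)) ^ r * k < 2 * ε)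
    (hs : k * (c * (d : ℝ) ^ (r + 1)) ≤ (1 + 2 * ε) ^ s) :
    l1 (fun i ↦ x i - xhat A x (2 * (r + s)) i) ≤ (1 + d / (2 * ε)) * ∑ i ∈ Sᶜ, x i := by
  obtain ⟨T, hST, hTk, hTsat, hexp⟩ := hA.exists_isSaturated_superset hε hc0 hc hS
  have hne := hA.nhdX_nonempty hc0 (Nat.floor_pos.2 (le_add_of_nonneg_left (by positivity)))
    (by positivity)
  have hw := isLocalErrorSeq_width hne hx
  have hd' (l : Fin m) : #{i | l ∈ nhdX A i} ≤ d := by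
    rw [filter_mem_nhdX]
    exact hd l
  have hnoise := hTsat.sum_noise_le (z := width A x 0) hc hd0 hd' hx
    (width_zero.ge.trans' (le_xhat_odd hne hx 0)) fun i l hl ↦ by
      rw [filter_mem_nhdX]
      exact width_zero_le_yvec hl
  have hrT : Real.exp (-(2 * ε)) ^ r * #T < 1 := by
    refine lt_of_mul_lt_mul_left ?_ (by positivity : 0 ≤ 2 * ε)
    calc 2 * ε * (Real.exp (-(2 * ε)) ^ r * #T) = Real.exp (-(2 * ε)) ^ r * (2 * ε * #T) := by ring
      _ ≤ Real.exp (-(2 * ε)) ^ r * k := by gcongr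
      _ < 2 * ε * 1 := by rwa [mul_one]
  have hsT : 2 * ε * #T * (c * (d : ℝ) ^ (r + 1)) ≤ (1 + 2 * ε) ^ s := by
    refine le_trans ?_ hs
    gcongr
  have hT : ∑ i ∈ T, width A x (r + s) i ≤ d / (2 * ε) * ∑ i ∈ Tᶜ, x i :=
    hw.sum_le hc0 (fun i _ ↦ hc i) hd0 hd' hε hexp (sum_nonneg fun i _ ↦ hx i) hnoise hrT hsT
  calc l1 (fun i ↦ x i - xhat A x (2 * (r + s)) i)
      = ∑ i ∈ T, (x i - xhat A x (2 * (r + s)) i) + ∑ i ∈ Tᶜ, (x i - xhat A x (2 * (r + s)) i) := by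
        rw [sum_add_sum_compl]
        exact sum_congr rfl fun i _ ↦ abs_of_nonneg (sub_nonneg.2 (xhat_even_le hne hx _ i))
    _ ≤ ∑ i ∈ T, width A x (r + s) i + ∑ i ∈ Tᶜ, x i := by
        gcongr with i _ i _
        · exact sub_le_sub_right (le_xhat_odd hne hx _ i) _
        · exact sub_le_self _ (xhat_even_nonneg _ i)
    _ ≤ (1 + d / (2 * ε)) * ∑ i ∈ Tᶜ, x i := by linarith
    _ ≤ (1 + d / (2 * ε)) * ∑ i ∈ Sᶜ, x i := by
        gcongr
        exact fun i _ _ ↦ hx i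

lemma sum_compl_support_le_l1_sub (x z : Fin n → ℝ) :
    ∑ i ∈ ({i | z i ≠ 0} : Finset (Fin n))ᶜ, x i ≤ l1 (fun i ↦ x i - z i) := calc
  _ ≤ ∑ i ∈ ({i | z i ≠ 0} : Finset (Fin n))ᶜ, |x i - z i| := by
    refine sum_le_sum fun i hi ↦ ?_
    have hzi : z i = 0 := by simpa using hi
    rw [hzi, sub_zero]
    exact le_abs_self (x i)
  _ ≤ l1 (fun i ↦ x i - z i) :=
    sum_le_sum_of_subset_of_nonneg (subset_univ _) fun i _ _ ↦ abs_nonneg _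

end Recovery

end MP

theorem l1_l1_approximate_recovery_general (ε : ℝ) (hε : 0 < ε) :
    ∃ C : ℝ, 0 < C ∧ ∀ n m c d k : ℕ, 0 < c → 0 < d → ∀ A : Fin m → Fin n → Bool,
      (∀ i, #(nhdX A i) ≤ c) → (∀ j, #(nhdY A j) ≤ d) →
      IsExpander A c ⌊(k : ℝ) / (2 * ε) + 1⌋₊ (1 / 2 + ε) →
      ∀ x z : Fin n → ℝ, (∀ i, 0 ≤ x i) → IsKSparse k z →
        ∀ t : ℕ, C * (1 + Real.log (k + 1)) * (1 + Real.log (c * d)) ≤ t →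
          l1 (fun i ↦ x i - xhat A x (2 * t) i) ≤
            (1 + d / (2 * ε)) * l1 (fun i ↦ x i - z i) := by
  obtain ⟨C, hC, hphases⟩ := exists_phase_lengths (δ := 2 * ε) (by positivity)
  refine ⟨C, hC, fun n m c d k hc0 hd0 A hc hd hA x z hx hz t ht ↦ ?_⟩
  obtain ⟨r, s, rfl, hr, hs⟩ :=
    hphases c d k t (mod_cast hc0) (mod_cast hd0) k.cast_nonneg ht
  refine (l1_sub_xhat_le_sum_compl hε hc0 hd0 hc hd hA hx hz hr hs).trans ?_
  gcongr
  exact sum_compl_support_le_l1_sub x z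

/-- **Theorem 2 (ℓ₁/ℓ₁ approximate recovery).**
If `G` is a `(c,d)`-regular `(⌊k/(2ε)+1⌋, 1/2+ε)`-expander and `x ∈ ℝ₊ⁿ`, then there is a
constant `C` depending only on `ε` such that for every `t ≥ C(1+log(k+1))(1+log(cd))`,
`‖x - x̂^{2t}‖₁ ≤ (1 + d/(2ε))·‖x - x⁽ᵏ⁾‖₁`. -/
theorem l1_l1_approximate_recovery (ε : ℝ) (hε : 0 < ε) :
    ∃ C : ℝ, 0 < C ∧
      ∀ (n m c d k : ℕ), 0 < n → 0 < m → 0 < c → 0 < d → 0 < k →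
        ∀ A : Fin m → Fin n → Bool,
          IsRegular A c d →
          IsExpander A c (Nat.floor ((k : ℝ) / (2 * ε) + 1)) (1 / 2 + ε) →
          ∀ x xk : Fin n → ℝ, (∀ i, 0 ≤ x i) → BestKSparse k x xk →
            ∀ t : ℕ,
              C * (1 + Real.log ((k : ℝ) + 1)) * (1 + Real.log ((c : ℝ) * d)) ≤ (t : ℝ) →
              l1 (fun i => x i - xhat A x (2 * t) i) ≤
                (1 + (d : ℝ) / (2 * ε)) * l1 (fun i => x i - xk i) := by
  obtain ⟨C, hC, h⟩ := l1_l1_approximate_recovery_general ε hε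
  exact ⟨C, hC, fun n m c d k _ _ hc hd _ A hA hexp x xk hx hxk t ht ↦
    h n m c d k hc hd A (fun i ↦ (hA.1 i).le) (fun j ↦ (hA.2 j).le) hexp x xk hx hxk.2.1 t ht⟩
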